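/- In the exterior algebra of V = ℂ⁸, the Cartan generators satisfy hᵢ ∧ hⱼ = 0 for all i ≠ j in {1,…,7}, and hᵢ ∧ hᵢ = 2·ω for every i, where ω = e₁∧e₂∧⋯∧e₈ is the standard volume element. Equivalently, hᵢ ∧ hⱼ = 2δᵢⱼ·ω. -/

import Mathlib

open ExteriorAlgebra

/-- `V = ℂ⁸`. -/
abbrev V8 : Type := Fin 8 → ℂ

/-- The standard basis vector `eₐ` of `ℂ⁸`, for `a ∈ {1,…,8}`. -/
noncomputable def stdVec (a : ℕ) : V8 :=
  Pi.single (⟨(a - 1) % 8, Nat.mod_lt _ (by norm_num)⟩ : Fin 8) 1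

/-- For a finite set `A = {a₁ < ⋯ < a_k} ⊆ {1,…,8}`, the wedge
`e_A = e_{a₁} ∧ ⋯ ∧ e_{a_k}` in the exterior algebra `⋀V`. -/
noncomputable def eWedge (A : Finset ℕ) : ExteriorAlgebra ℂ V8 :=
  ((A.sort (· ≤ ·)).map fun a => ExteriorAlgebra.ι ℂ (stdVec a)).prod

/-- The volume element `ω = e₁ ∧ e₂ ∧ ⋯ ∧ e₈`. -/
noncomputable def vol : ExteriorAlgebra ℂ V8 := eWedge (Finset.Icc 1 8)

/-- The fourtuples `K₁,…,K₇` of the Cartan subspace of `⋀⁴ℂ⁸`. -/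
def cartanK : ℕ → Finset ℕ
  | 1 => {1, 2, 3, 4}
  | 2 => {1, 3, 5, 7}
  | 3 => {1, 2, 5, 6}
  | 4 => {1, 3, 6, 8}
  | 5 => {1, 4, 5, 8}
  | 6 => {1, 4, 6, 7}
  | 7 => {1, 2, 7, 8}
  | _ => ∅

/-- The complementary fourtuples `L₁,…,L₇`. -/
def cartanL : ℕ → Finset ℕ
  | 1 => {5, 6, 7, 8}
  | 2 => {2, 4, 6, 8}
  | 3 => {3, 4, 7, 8}
  | 4 => {2, 4, 5, 7}
  | 5 => {2, 3, 6, 7}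
  | 6 => {2, 3, 5, 8}
  | 7 => {3, 4, 5, 6}
  | _ => ∅

/-- The Cartan generators `hᵢ = e_{Kᵢ} + e_{Lᵢ} ∈ ⋀⁴V`. -/
noncomputable def cartanH (i : ℕ) : ExteriorAlgebra ℂ V8 :=
  eWedge (cartanK i) + eWedge (cartanL i)

/-- Basis vectors viewed in the exterior algebra. -/
noncomputable def gen (a : ℕ) : ExteriorAlgebra ℂ V8 := ExteriorAlgebra.ι ℂ (stdVec a)

lemma gen_sq (a : ℕ) : gen a * gen a = 0 := ExteriorAlgebra.ι_sq_zero _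

lemma gen_sq_assoc (a : ℕ) (x : ExteriorAlgebra ℂ V8) : gen a * (gen a * x) = 0 := by
  rw [← mul_assoc, gen_sq, zero_mul]

lemma gen_swap (a b : ℕ) (_ : b < a) : gen a * gen b = -(gen b * gen a) :=
  eq_neg_of_add_eq_zero_left (ExteriorAlgebra.ι_add_mul_swap _ _)

lemma gen_swap_assoc (a b : ℕ) (h : b < a) (x : ExteriorAlgebra ℂ V8) :
    gen a * (gen b * x) = -(gen b * (gen a * x)) := by
  rw [← mul_assoc, gen_swap a b h, neg_mul, mul_assoc]

lemma eWedge_of_list (A : Finset ℕ) (l : List ℕ) (hA : l.toFinset = A)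
    (hn : l.Nodup) (hl : l.Pairwise (· ≤ ·)) : eWedge A = (l.map gen).prod := by
  subst hA
  unfold eWedge
  rw [(List.toFinset_sort (· ≤ ·) hn).2 hl]
  rfl

lemma eWedge_four (a b c d : ℕ) (h₁ : a < b) (h₂ : b < c) (h₃ : c < d) :
    eWedge {a, b, c, d} = gen a * (gen b * (gen c * gen d)) := by
  rw [eWedge_of_list _ [a, b, c, d] (by simp) (by simp; omega) (by simp; omega)]
  simp

lemma vol_eq : vol = gen 1 * (gen 2 * (gen 3 * (gen 4 * (gen 5 * (gen 6 * (gen 7 * gen 8)))))) := by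
  unfold vol
  rw [eWedge_of_list _ [1, 2, 3, 4, 5, 6, 7, 8] (by decide) (by decide) (by decide)]
  simp

set_option maxHeartbeats 8000000 in
/-- The Cartan generators satisfy `hᵢ ∧ hⱼ = 2 δᵢⱼ ω`: the wedge of two distinct
generators vanishes, and the wedge of a generator with itself is twice the volume
element. -/
theorem cartan_generators_wedge :
    ∀ i ∈ Finset.Icc 1 7, ∀ j ∈ Finset.Icc 1 7,
      cartanH i * cartanH j = if i = j then (2 : ℂ) • vol else 0 := by
  intro i hi j hj
  rw [Finset.mem_Icc] at hi hj
  obtain ⟨hi1, hi2⟩ := hi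
  obtain ⟨hj1, hj2⟩ := hj
  interval_cases i <;> interval_cases j <;>
    simp [cartanH, cartanK, cartanL, eWedge_four, vol_eq, mul_add, add_mul, mul_assoc, gen_sq,
      gen_sq_assoc, gen_swap, gen_swap_assoc, two_smul]
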